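/- Suppose d ≥ n and the n × d matrix A has full rank n, so that its n-th largest singular value σ_n(A) is positive. If 0 < λ < σ_n(A)/√(d−k), then every local minimum x* of the objective F1_λ(x) = ‖Ax − y‖₂ + λ τ_k(x) satisfies A x* = y. -/

import Mathlib

/-!
Fix a direction `v` at a local minimum `x` of `‖A z - y‖ + p z`, where `p` grows at rate at most
`c` near `x`, and let `r = A x - y`. If `r ≠ 0`, the residual norm is differentiable at `x`, and
comparing its slope `⟪r, A v⟫ / ‖r‖` along `v` with the growth of `p` gives
`0 ≤ ⟪r, A v⟫ + c ‖v‖ ‖r‖`. The steepest descent direction `v = -Aᵀ r` turns this into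
`‖Aᵀ r‖ ≤ c ‖r‖`, while `σₙ(A) ‖r‖ ≤ ‖Aᵀ r‖`; hence `r = 0` as soon as `c < σₙ(A)`.
The penalty `λ τ_k` grows at rate at most `λ √(d - k)`, because `τ_k` is a minimum of `ℓ₁` norms
over sets of `d - k` coordinates.
-/

open Finset Filter Topology

/-- Euclidean (ℓ₂) norm of a vector in ℝ^m. -/
noncomputable def l2norm {m : ℕ} (v : Fin m → ℝ) : ℝ := Real.sqrt (∑ i, v i ^ 2)

/-- The trimmed lasso penalty: the minimum, over index sets Λ of size d − k,
of the ℓ₁ norm of x restricted to Λ. -/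
noncomputable def tauTL {d : ℕ} (k : ℕ) (x : Fin d → ℝ) : ℝ :=
  sInf ((fun Λ : Finset (Fin d) => ∑ i ∈ Λ, |x i|) '' {Λ : Finset (Fin d) | Λ.card = d - k})

/-- The n-th (smallest) singular value of an n × d matrix A (n ≤ d):
the infimum of ‖Aᵀu‖₂ over unit vectors u ∈ ℝⁿ. -/
noncomputable def sigmaN {n d : ℕ} (A : Matrix (Fin n) (Fin d) ℝ) : ℝ :=
  sInf {r : ℝ | ∃ u : Fin n → ℝ, l2norm u = 1 ∧ r = l2norm (Matrix.vecMul u A)}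

open scoped RealInnerProductSpace

section FirstOrderCondition

variable {F : Type*} [NormedAddCommGroup F] [InnerProductSpace ℝ F]

theorem hasDerivAt_norm_comp {f : ℝ → F} {f' : F} {t : ℝ} (hf : HasDerivAt f f' t)
    (h0 : f t ≠ 0) : HasDerivAt (fun s => ‖f s‖) (⟪f t, f'⟫ / ‖f t‖) t := by
  have hsqrt := hf.norm_sq.sqrt (pow_ne_zero 2 (norm_ne_zero_iff.2 h0))
  simpa only [Real.sqrt_sq (norm_nonneg _), mul_div_mul_left _ _ (two_ne_zero (α := ℝ))]
    using hsqrt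

theorem nonneg_of_isLocalMinOn_Ici_of_hasDerivWithinAt {g : ℝ → ℝ} {g' a : ℝ}
    (hmin : IsLocalMinOn g (Set.Ici a) a) (hg : HasDerivWithinAt g g' (Set.Ici a) a) : 0 ≤ g' := by
  have htangent : (1 : ℝ) ∈ posTangentConeAt (Set.Ici a) a := by
    rw [one_mem_posTangentConeAt_iff_mem_closure, Set.inter_eq_left.2 Set.Ioi_subset_Ici_self,
      closure_Ioi]
    exact Set.self_mem_Ici
  simpa using hmin.hasFDerivWithinAt_nonneg hg.hasFDerivWithinAt htangent

variable {E : Type*} [AddCommGroup E] [Module ℝ E] [TopologicalSpace E] [ContinuousAdd E]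
  [ContinuousSMul ℝ E]

theorem tendsto_add_smul_nhdsGE_zero (x v : E) :
    Tendsto (fun t : ℝ => x + t • v) (𝓝[≥] 0) (𝓝 x) := by
  have hcont : Continuous fun t : ℝ => x + t • v := by fun_prop
  simpa using (hcont.tendsto 0).mono_left nhdsWithin_le_nhds

theorem inner_lineDeriv_add_mul_norm_nonneg_of_isLocalMin {f : E → F} {p : E → ℝ} {x v : E}
    {f' : F} {c : ℝ} (hf : HasLineDerivAt ℝ f f' x v)
    (hp : ∀ᶠ t : ℝ in 𝓝[≥] 0, p (x + t • v) ≤ p x + t * c)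
    (hmin : IsLocalMin (fun z => ‖f z‖ + p z) x) : 0 ≤ ⟪f x, f'⟫ + c * ‖f x‖ := by
  rcases eq_or_ne (f x) 0 with hx | hx
  · simp [hx]
  have hmajorant : IsLocalMinOn (fun t : ℝ => ‖f (x + t • v)‖ + t * c) (Set.Ici 0) 0 := by
    filter_upwards [(tendsto_add_smul_nhdsGE_zero x v).eventually hmin, hp] with t hmin_t hp_t
    simp only [zero_smul, add_zero, zero_mul]
    linarith
  have hderiv : HasDerivAt (fun t : ℝ => ‖f (x + t • v)‖ + t * c) (⟪f x, f'⟫ / ‖f x‖ + c) 0 := by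
    have hnorm := hasDerivAt_norm_comp hf (by simpa using hx)
    simpa using hnorm.fun_add ((hasDerivAt_id (0 : ℝ)).mul_const c)
  have hslope := nonneg_of_isLocalMinOn_Ici_of_hasDerivWithinAt hmajorant hderiv.hasDerivWithinAt
  calc 0 ≤ (⟪f x, f'⟫ / ‖f x‖ + c) * ‖f x‖ := mul_nonneg hslope (norm_nonneg _)
    _ = ⟪f x, f'⟫ + c * ‖f x‖ := by rw [add_mul, div_mul_cancel₀ _ (norm_ne_zero_iff.2 hx)]

end FirstOrderCondition

section L2Norm

variable {m : ℕ}

theorem l2norm_eq_norm_toLp (v : Fin m → ℝ) : l2norm v = ‖WithLp.toLp 2 v‖ := by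
  simp [l2norm, EuclideanSpace.norm_eq]

theorem l2norm_nonneg (v : Fin m → ℝ) : 0 ≤ l2norm v := Real.sqrt_nonneg _

theorem l2norm_eq_zero {v : Fin m → ℝ} : l2norm v = 0 ↔ v = 0 := by
  rw [l2norm_eq_norm_toLp, norm_eq_zero, WithLp.toLp_eq_zero]

theorem l2norm_smul (a : ℝ) (v : Fin m → ℝ) : l2norm (a • v) = |a| * l2norm v := by
  rw [l2norm_eq_norm_toLp, l2norm_eq_norm_toLp, WithLp.toLp_smul, norm_smul, Real.norm_eq_abs]

theorem dotProduct_self_eq_l2norm_sq (v : Fin m → ℝ) : v ⬝ᵥ v = l2norm v ^ 2 := by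
  rw [l2norm_eq_norm_toLp, EuclideanSpace.real_norm_sq_eq]
  simp only [dotProduct, sq]

theorem sum_abs_le_sqrt_card_mul_l2norm (s : Finset (Fin m)) (v : Fin m → ℝ) :
    ∑ i ∈ s, |v i| ≤ √(#s : ℝ) * l2norm v := by
  rw [l2norm, ← Real.sqrt_mul (Nat.cast_nonneg _)]
  apply Real.le_sqrt_of_sq_le
  calc (∑ i ∈ s, |v i|) ^ 2 ≤ #s * ∑ i ∈ s, |v i| ^ 2 := sq_sum_le_card_mul_sum_sq
    _ = #s * ∑ i ∈ s, v i ^ 2 := by simp only [sq_abs]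
    _ ≤ #s * ∑ i, v i ^ 2 := by gcongr; exact s.subset_univ

end L2Norm

section TrimmedLasso

variable {d k : ℕ}

theorem tauTL_le_sum_abs (x : Fin d → ℝ) {s : Finset (Fin d)} (hs : #s = d - k) :
    tauTL k x ≤ ∑ i ∈ s, |x i| :=
  csInf_le (Set.toFinite _).bddBelow ⟨s, hs, rfl⟩

theorem exists_card_eq_sum_abs_eq_tauTL (k : ℕ) (x : Fin d → ℝ) :
    ∃ s : Finset (Fin d), #s = d - k ∧ ∑ i ∈ s, |x i| = tauTL k x := by
  have hne : {s : Finset (Fin d) | #s = d - k}.Nonempty := by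
    obtain ⟨s, -, hs⟩ := exists_subset_card_eq (s := (univ : Finset (Fin d))) (n := d - k) (by simp)
    exact ⟨s, hs⟩
  exact (hne.image fun s => ∑ i ∈ s, |x i|).csInf_mem (Set.toFinite _)

theorem tauTL_le_add_sqrt_mul_l2norm_sub (hk : k ≤ d) (x z : Fin d → ℝ) :
    tauTL k z ≤ tauTL k x + √((d : ℝ) - k) * l2norm (z - x) := by
  obtain ⟨s, hs, hsx⟩ := exists_card_eq_sum_abs_eq_tauTL k x
  calc tauTL k z ≤ ∑ i ∈ s, |z i| := tauTL_le_sum_abs z hs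
    _ ≤ ∑ i ∈ s, (|x i| + |(z - x) i|) := by
        gcongr with i
        simpa using abs_add_le (x i) ((z - x) i)
    _ = tauTL k x + ∑ i ∈ s, |(z - x) i| := by rw [sum_add_distrib, hsx]
    _ ≤ tauTL k x + √((d : ℝ) - k) * l2norm (z - x) := by
        rw [← Nat.cast_sub hk, ← hs]
        gcongr
        exact sum_abs_le_sqrt_card_mul_l2norm s (z - x)

end TrimmedLasso

section Residual

variable {n d : ℕ} (A : Matrix (Fin n) (Fin d) ℝ)

theorem sigmaN_le_l2norm_vecMul {u : Fin n → ℝ} (hu : l2norm u = 1) :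
    sigmaN A ≤ l2norm (Matrix.vecMul u A) :=
  csInf_le ⟨0, by rintro _ ⟨v, -, rfl⟩; exact l2norm_nonneg _⟩ ⟨u, hu, rfl⟩

theorem sigmaN_mul_l2norm_le_l2norm_vecMul (u : Fin n → ℝ) :
    sigmaN A * l2norm u ≤ l2norm (Matrix.vecMul u A) := by
  rcases (l2norm_nonneg u).eq_or_lt with h0 | hpos
  · simpa [← h0] using l2norm_nonneg _
  have habs : |(l2norm u)⁻¹| = (l2norm u)⁻¹ := abs_of_pos (inv_pos.2 hpos)
  have hunit : l2norm ((l2norm u)⁻¹ • u) = 1 := by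
    rw [l2norm_smul, habs, inv_mul_cancel₀ hpos.ne']
  have hle := sigmaN_le_l2norm_vecMul A hunit
  rwa [Matrix.smul_vecMul, l2norm_smul, habs, ← div_eq_inv_mul, le_div_iff₀ hpos] at hle

variable {A} {y : Fin n → ℝ} {p : (Fin d → ℝ) → ℝ} {x : Fin d → ℝ} {c : ℝ}

theorem dotProduct_mulVec_add_mul_l2norm_nonneg_of_isLocalMin
    (hp : ∀ᶠ z in 𝓝 x, p z ≤ p x + c * l2norm (z - x))
    (hmin : IsLocalMin (fun z => l2norm (A.mulVec z - y) + p z) x) (v : Fin d → ℝ) :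
    0 ≤ (A.mulVec x - y) ⬝ᵥ A.mulVec v + c * l2norm v * l2norm (A.mulVec x - y) := by
  have hres : HasLineDerivAt ℝ (fun z => WithLp.toLp 2 (A.mulVec z - y))
      (WithLp.toLp 2 (A.mulVec v)) x v := by
    have hsmul := (hasDerivAt_id (0 : ℝ)).smul_const (WithLp.toLp 2 (A.mulVec v))
    have haffine (t : ℝ) : WithLp.toLp 2 (A.mulVec (x + t • v) - y) =
        WithLp.toLp 2 (A.mulVec x - y) + t • WithLp.toLp 2 (A.mulVec v) := by
      rw [Matrix.mulVec_add, Matrix.mulVec_smul, add_sub_right_comm, WithLp.toLp_add,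
        WithLp.toLp_smul]
    simpa only [HasLineDerivAt, haffine, id, one_smul]
      using hsmul.const_add (WithLp.toLp 2 (A.mulVec x - y))
  have hp_line : ∀ᶠ t : ℝ in 𝓝[≥] 0, p (x + t • v) ≤ p x + t * (c * l2norm v) := by
    filter_upwards [(tendsto_add_smul_nhdsGE_zero x v).eventually hp, self_mem_nhdsWithin]
      with t hpt ht
    rwa [add_sub_cancel_left, l2norm_smul, abs_of_nonneg ht, mul_left_comm] at hpt
  simp only [l2norm_eq_norm_toLp (A.mulVec _ - y)] at hmin ⊢
  have hfirst := inner_lineDeriv_add_mul_norm_nonneg_of_isLocalMin hres hp_line hmin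
  rwa [EuclideanSpace.inner_toLp_toLp, star_trivial, dotProduct_comm] at hfirst

theorem l2norm_vecMul_residual_le_of_isLocalMin (hc : 0 ≤ c)
    (hp : ∀ᶠ z in 𝓝 x, p z ≤ p x + c * l2norm (z - x))
    (hmin : IsLocalMin (fun z => l2norm (A.mulVec z - y) + p z) x) :
    l2norm (Matrix.vecMul (A.mulVec x - y) A) ≤ c * l2norm (A.mulVec x - y) := by
  set r := A.mulVec x - y
  set w := Matrix.vecMul r A
  have hdescent : 0 ≤ -l2norm w ^ 2 + c * l2norm w * l2norm r := by
    have hfirst := dotProduct_mulVec_add_mul_l2norm_nonneg_of_isLocalMin hp hmin (-w)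
    have hnorm_neg : l2norm (-w) = l2norm w := by simpa using l2norm_smul (-1) w
    rwa [Matrix.dotProduct_mulVec, dotProduct_neg, dotProduct_self_eq_l2norm_sq, hnorm_neg]
      at hfirst
  rcases (l2norm_nonneg w).eq_or_lt with h0 | hpos
  · rw [← h0]
    exact mul_nonneg hc (l2norm_nonneg r)
  · exact le_of_mul_le_mul_left (by linarith) hpos

theorem stmt2_general (hc : 0 ≤ c) (hcσ : c < sigmaN A)
    (hp : ∀ᶠ z in 𝓝 x, p z ≤ p x + c * l2norm (z - x))
    (hmin : IsLocalMin (fun z => l2norm (A.mulVec z - y) + p z) x) :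
    A.mulVec x = y := by
  have hupper := l2norm_vecMul_residual_le_of_isLocalMin hc hp hmin
  have hlower := sigmaN_mul_l2norm_le_l2norm_vecMul A (A.mulVec x - y)
  have hzero : l2norm (A.mulVec x - y) = 0 := by
    nlinarith [l2norm_nonneg (A.mulVec x - y)]
  exact sub_eq_zero.1 (l2norm_eq_zero.1 hzero)

end Residual

/-- If d ≥ n, A has full rank n, and 0 < λ < σₙ(A)/√(d−k), then every local
minimum x* of F1_λ(x) = ‖Ax − y‖₂ + λ τ_k(x) satisfies A x* = y. -/
theorem stmt2 {n d : ℕ} (k : ℕ) (hk : 0 < k) (hkd : k < d) (hnd : n ≤ d)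
    (A : Matrix (Fin n) (Fin d) ℝ) (hrank : A.rank = n)
    (y : Fin n → ℝ) (lam : ℝ)
    (hlam0 : 0 < lam) (hlam : lam < sigmaN A / Real.sqrt ((d : ℝ) - (k : ℝ)))
    (xstar : Fin d → ℝ)
    (hmin : IsLocalMin
      (fun x : Fin d → ℝ => l2norm (A.mulVec x - y) + lam * tauTL k x) xstar) :
    A.mulVec xstar = y := by
  have hs : 0 < √((d : ℝ) - k) := Real.sqrt_pos.2 (sub_pos.2 (Nat.cast_lt.2 hkd))
  refine stmt2_general (by positivity) ((lt_div_iff₀ hs).1 hlam) (.of_forall fun z => ?_) hmin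
  rw [mul_assoc, ← mul_add]
  gcongr
  exact tauTL_le_add_sqrt_mul_l2norm_sub hkd.le xstar z
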